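/- Under the BARSS mixture setup described in the context, let λ_k > 0 be the tier-k base-station intensity and γ_k ∈ (0,1) the tier-k target outage probability, for k = 1,…,K. Define the conditional tier-k outage probability ρ_k(τ) = ∫₀^∞ P( log(1 + P_k·H_k·G_k(r)/(N₀ + I_{k,r}/PG)) < τ )·f_k(r) dr, the conditional tier-k outage capacity C_o(k,γ_k) = sup{τ ≥ 0 : ρ_k(τ) ≤ γ_k}, the bound functions ρ_k⁺(τ) = 1 − ∫₀^∞ f_k(r)·E[V̂_k⁺(H_k,τ,r)] dr and ρ_k⁻(τ) = 1 − ∫₀^∞ f_k(r)·E[V̂_k⁻(H_k,τ,r)] dr, and the bound capacities C_o⁺(k,γ_k) = sup{τ ≥ 0 : ρ_k⁺(τ) ≤ γ_k} and C_o⁻(k,γ_k) = sup{τ ≥ 0 : ρ_k⁻(τ) ≤ γ_k} (all suprema in [0,∞] with sup ∅ = 0). Then the area spectral efficiency ASE(λ,γ) = Σ_{k=1}^K λ_k·(1 − γ_k)·C_o(k,γ_k) satisfies Σ_{k=1}^K λ_k·(1 − γ_k)·C_o⁻(k,γ_k) ≤ ASE(λ,γ) ≤ Σ_{k=1}^K λ_k·(1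 − γ_k)·C_o⁺(k,γ_k). -/

import Mathlib

open MeasureTheory ProbabilityTheory
open scoped ProbabilityTheory ENNReal

/-- The standard normal cumulative distribution function. -/
noncomputable def stdNormalCDF (x : ℝ) : ℝ :=
  (Real.sqrt (2 * Real.pi))⁻¹ * ∫ t in Set.Iic x, Real.exp (-(t ^ 2) / 2)

/-- The Berry–Esseen multiplicative function `c(x) = min{0.4785, 31.935/(1+|x|³)}`. -/
noncomputable def berryC (x : ℝ) : ℝ := min 0.4785 (31.935 / (1 + |x| ^ 3))

/-!
For `τ > 0`, tier `k` at distance `r` and fading `h` supports the rate `τ` exactly when the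
interference stays below an explicit threshold `T(h, r)`. Since fading and interference are
independent, the conditional success probability is `E[F(T(H, r))]`, with `F` the distribution
function of the interference, so that `ρ_k(τ) = 1 - ∫ f_k(r) E[F(T(H_k, r))] dr`. The Gaussian
approximation of `F`, shifted by its error bound, brackets the integrand between `V̂_k⁻` and
`V̂_k⁺`; below the minimal fading level the threshold is negative, so there `F(T)` vanishes and no
approximation is needed. Hence `ρ_k⁺ ≤ ρ_k ≤ ρ_k⁻`, and a larger outage curve has a smaller
outage capacity.
-/

lemma stdNormalCDF_eq_cdf_gaussianReal (x : ℝ) : stdNormalCDF x = cdf (gaussianReal 0 1) x := by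
  rw [cdf_eq_real, measureReal_def, gaussianReal_apply_eq_integral 0 one_ne_zero,
    ENNReal.toReal_ofReal (integral_nonneg fun t => gaussianPDFReal_nonneg 0 1 t)]
  simp only [stdNormalCDF, gaussianPDFReal, sub_zero, NNReal.coe_one, mul_one, integral_const_mul]

lemma measurable_stdNormalCDF : Measurable stdNormalCDF := by
  rw [funext stdNormalCDF_eq_cdf_gaussianReal]
  exact (monotone_cdf _).measurable

lemma measurable_berryC : Measurable berryC := by
  unfold berryC
  fun_prop

section Independence

variable {Ω α β : Type*} [MeasurableSpace Ω] [MeasurableSpace α] [MeasurableSpace β]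
  {Q : Measure Ω}

lemma measurable_measureReal_prodMk_mem [SFinite Q] {S : Set (α × β)} (hS : MeasurableSet S)
    {Y : Ω → β} (hY : Measurable Y) : Measurable fun x => Q.real {ω | (x, Y ω) ∈ S} :=
  (measurable_measure_prodMk_left (ν := Q)
    (hS.preimage (measurable_fst.prodMk (hY.comp measurable_snd)))).ennreal_toReal

lemma measureReal_prodMk_mem_eq_integral [IsFiniteMeasure Q] {X : Ω → α} {Y : Ω → β}
    (hX : Measurable X) (hY : Measurable Y) (hXY : IndepFun X Y Q) {S : Set (α × β)}
    (hS : MeasurableSet S) :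
    Q.real {ω | (X ω, Y ω) ∈ S} = ∫ ω, Q.real {ω' | (X ω, Y ω') ∈ S} ∂Q := by
  have map_section (x : α) : Q.map Y (Prod.mk x ⁻¹' S) = Q {ω | (x, Y ω) ∈ S} :=
    Measure.map_apply hY (measurable_prodMk_left hS)
  have joint : Q {ω | (X ω, Y ω) ∈ S} = ∫⁻ ω, Q {ω' | (X ω, Y ω') ∈ S} ∂Q := calc
    _ = Q.map (fun ω => (X ω, Y ω)) S := (Measure.map_apply (hX.prodMk hY) hS).symm
    _ = ((Q.map X).prod (Q.map Y)) S := by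
      rw [(indepFun_iff_map_prod_eq_prod_map_map hX.aemeasurable hY.aemeasurable).1 hXY]
    _ = ∫⁻ ω, Q {ω' | (X ω, Y ω') ∈ S} ∂Q := by
      rw [Measure.prod_apply hS, lintegral_map (measurable_measure_prodMk_left hS) hX]
      simp only [map_section]
  rw [measureReal_def, joint, integral_eq_lintegral_of_nonneg_ae (.of_forall fun _ =>
    measureReal_nonneg) ((measurable_measureReal_prodMk_mem hS hY).comp hX).aestronglyMeasurable]
  simp

end Independence

section Mixture

variable {α Ω : Type*} [MeasurableSpace α] [MeasurableSpace Ω] {ν : Measure α} {Q : Measure Ω}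
  [IsFiniteMeasure Q] {f q : α → ℝ} {U V W : α → Ω → ℝ}

lemma integrable_mul_integral (hf : Integrable f ν) (hV : Measurable (Function.uncurry V)) {C : ℝ}
    (hVC : ∀ᵐ r ∂ν, ∀ ω, ‖V r ω‖ ≤ C) : Integrable (fun r => f r * ∫ ω, V r ω ∂Q) ν := by
  refine hf.mul_bdd (c := C * Q.real Set.univ)
    hV.stronglyMeasurable.integral_prod_right.aestronglyMeasurable ?_
  filter_upwards [hVC] with r hr using norm_integral_le_of_norm_le_const (.of_forall hr)

lemma integral_mul_integral_mono (hf : Integrable f ν) (hf0 : 0 ≤ᵐ[ν] f)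
    (hV : Measurable (Function.uncurry V)) (hU0 : ∀ᵐ r ∂ν, ∀ ω, 0 ≤ U r ω)
    (hUV : ∀ᵐ r ∂ν, ∀ ω, U r ω ≤ V r ω) {C : ℝ} (hVC : ∀ᵐ r ∂ν, ∀ ω, V r ω ≤ C) :
    ∫ r, f r * ∫ ω, U r ω ∂Q ∂ν ≤ ∫ r, f r * ∫ ω, V r ω ∂Q ∂ν := by
  have norm_le : ∀ᵐ r ∂ν, ∀ ω, ‖V r ω‖ ≤ C := by
    filter_upwards [hU0, hUV, hVC] with r h0 h1 hC ω
    rw [Real.norm_of_nonneg ((h0 ω).trans (h1 ω))]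
    exact hC ω
  refine integral_mono_of_nonneg ?_ (integrable_mul_integral hf hV norm_le) ?_
  · filter_upwards [hf0, hU0] with r hr h0
    exact mul_nonneg hr (integral_nonneg h0)
  · filter_upwards [hf0, hU0, hUV, norm_le] with r hr h0 h1 hC
    have hVr : Integrable (V r) Q := .of_bound
      (hV.comp measurable_prodMk_left).aestronglyMeasurable C (.of_forall hC)
    exact mul_le_mul_of_nonneg_left
      (integral_mono_of_nonneg (.of_forall h0) hVr (.of_forall h1)) hr

lemma integral_one_sub_mul_eq (hf : ∫ r, f r ∂ν = 1) (hV : Measurable (Function.uncurry V)) {C : ℝ}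
    (hVC : ∀ᵐ r ∂ν, ∀ ω, ‖V r ω‖ ≤ C) (hq : ∀ᵐ r ∂ν, q r = 1 - ∫ ω, V r ω ∂Q) :
    ∫ r, q r * f r ∂ν = 1 - ∫ r, f r * ∫ ω, V r ω ∂Q ∂ν := by
  have hfi := integrable_of_integral_eq_one hf
  calc
    _ = ∫ r, (f r - f r * ∫ ω, V r ω ∂Q) ∂ν := by
      refine integral_congr_ae ?_
      filter_upwards [hq] with r hr
      rw [hr]
      ring
    _ = 1 - ∫ r, f r * ∫ ω, V r ω ∂Q ∂ν := by
      rw [integral_sub hfi (integrable_mul_integral hfi hV hVC), hf]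

lemma integral_mul_mem_Icc_of_eq_one_sub (hf0 : 0 ≤ᵐ[ν] f) (hf : ∫ r, f r ∂ν = 1)
    (hV : Measurable (Function.uncurry V)) (hW : Measurable (Function.uncurry W))
    (hU0 : ∀ᵐ r ∂ν, ∀ ω, 0 ≤ U r ω) (hUV : ∀ᵐ r ∂ν, ∀ ω, U r ω ≤ V r ω)
    (hVW : ∀ᵐ r ∂ν, ∀ ω, V r ω ≤ W r ω) {C : ℝ} (hWC : ∀ᵐ r ∂ν, ∀ ω, W r ω ≤ C)
    (hq : ∀ᵐ r ∂ν, q r = 1 - ∫ ω, V r ω ∂Q) :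
    ∫ r, q r * f r ∂ν ∈ Set.Icc (1 - ∫ r, f r * ∫ ω, W r ω ∂Q ∂ν)
      (1 - ∫ r, f r * ∫ ω, U r ω ∂Q ∂ν) := by
  have hfi := integrable_of_integral_eq_one hf
  have hV0 : ∀ᵐ r ∂ν, ∀ ω, 0 ≤ V r ω := by
    filter_upwards [hU0, hUV] with r h0 h1 ω using (h0 ω).trans (h1 ω)
  have hVC : ∀ᵐ r ∂ν, ∀ ω, V r ω ≤ C := by
    filter_upwards [hVW, hWC] with r h1 h2 ω using (h1 ω).trans (h2 ω)
  have norm_le : ∀ᵐ r ∂ν, ∀ ω, ‖V r ω‖ ≤ C := by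
    filter_upwards [hV0, hVC] with r h0 h1 ω
    rw [Real.norm_of_nonneg (h0 ω)]
    exact h1 ω
  rw [integral_one_sub_mul_eq hf hV norm_le hq]
  exact ⟨sub_le_sub_left (integral_mul_integral_mono hfi hf0 hW hV0 hVW hWC) 1,
    sub_le_sub_left (integral_mul_integral_mono hfi hf0 hV hU0 hUV hVC) 1⟩

end Mixture

section SuccessBounds

/-- The form of `V̂⁺`: an approximation `Φ` of a distribution function with pointwise error `ε`,
raised by the error, clipped at `1`, and cut off below the fading level `h₀`. -/
noncomputable def successUpperBound (Φ ε : ℝ → ℝ) (h₀ h ζ : ℝ) : ℝ :=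
  if h₀ ≤ h then min 1 (Φ ζ + ε ζ) else 0

/-- The form of `V̂⁻`: the counterpart of `successUpperBound` lowered by the error and clipped
at `0`. -/
noncomputable def successLowerBound (Φ ε : ℝ → ℝ) (h₀ h ζ : ℝ) : ℝ :=
  if h₀ ≤ h then max 0 (Φ ζ - ε ζ) else 0

variable {Φ ε : ℝ → ℝ} {h₀ h ζ p : ℝ}

lemma successUpperBound_le_one : successUpperBound Φ ε h₀ h ζ ≤ 1 := by
  unfold successUpperBound
  split_ifs
  exacts [min_le_left _ _, zero_le_one]

lemma successLowerBound_nonneg : 0 ≤ successLowerBound Φ ε h₀ h ζ := by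
  unfold successLowerBound
  split_ifs
  exacts [le_max_left _ _, le_rfl]

lemma le_successUpperBound (hp : p ≤ 1) (hΦ : |p - Φ ζ| ≤ ε ζ) (hcut : h < h₀ → p ≤ 0) :
    p ≤ successUpperBound Φ ε h₀ h ζ := by
  unfold successUpperBound
  split_ifs with hh
  · exact le_min hp (sub_le_iff_le_add'.1 (abs_le.1 hΦ).2)
  · exact hcut (not_le.1 hh)

lemma successLowerBound_le (hp : 0 ≤ p) (hΦ : |p - Φ ζ| ≤ ε ζ) :
    successLowerBound Φ ε h₀ h ζ ≤ p := by
  unfold successLowerBound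
  split_ifs
  · exact max_le hp (by linarith [(abs_le.1 hΦ).1])
  · exact hp

lemma measurable_successUpperBound {α : Type*} [MeasurableSpace α] {ε : α → ℝ → ℝ}
    {h₀ h ζ : α → ℝ} (hΦ : Measurable Φ) (hε : Measurable (Function.uncurry ε))
    (hh₀ : Measurable h₀) (hh : Measurable h) (hζ : Measurable ζ) :
    Measurable fun x => successUpperBound Φ (ε x) (h₀ x) (h x) (ζ x) :=
  Measurable.ite (measurableSet_le hh₀ hh)
    (measurable_const.min ((hΦ.comp hζ).add (hε.comp (measurable_id.prodMk hζ)))) measurable_const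

end SuccessBounds

section Outage

/-- The interference level up to which a link with transmit power `p`, path loss `g`, noise power
`N`, processing gain `PG` and fading `h` supports the rate `τ`. The threshold `ζ` of the paper is
its standardization `(interferenceThreshold p g N PG τ h - μ) / σ`. -/
noncomputable def interferenceThreshold (p g N PG τ h : ℝ) : ℝ :=
  p * (h * g / (Real.exp τ - 1) - N / p) * PG

variable {p g N PG τ h i : ℝ}

@[fun_prop]
lemma measurable_interferenceThreshold {α : Type*} [MeasurableSpace α] {g h : α → ℝ}
    (hg : Measurable g) (hh : Measurable h) :
    Measurable fun x => interferenceThreshold p (g x) N PG τ (h x) := by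
  unfold interferenceThreshold
  fun_prop

lemma log_one_add_sinr_lt_iff (hp : 0 < p) (hg : 0 ≤ g) (hPG : 0 < PG) (hτ : 0 < τ) (hh : 0 ≤ h)
    (hi : 0 < N + i / PG) :
    Real.log (1 + p * h * g / (N + i / PG)) < τ ↔ interferenceThreshold p g N PG τ h < i := by
  have hexp : 0 < Real.exp τ - 1 := sub_pos.2 (Real.one_lt_exp_iff.2 hτ)
  have hthreshold : interferenceThreshold p g N PG τ h =
      (p * h * g / (Real.exp τ - 1) - N) * PG := by
    unfold interferenceThreshold
    field_simp
  calc
    _ ↔ p * h * g / (N + i / PG) < Real.exp τ - 1 := by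
      rw [Real.log_lt_iff_lt_exp (by positivity), lt_sub_iff_add_lt']
    _ ↔ p * h * g / (Real.exp τ - 1) < N + i / PG := div_lt_comm₀ hi hexp
    _ ↔ interferenceThreshold p g N PG τ h < i := by
      rw [hthreshold, ← lt_div_iff₀ hPG, sub_lt_iff_lt_add']

lemma interferenceThreshold_neg (hp : 0 < p) (hg : 0 < g) (hPG : 0 < PG) (hτ : 0 < τ)
    (hh : h < (Real.exp τ - 1) * N / (p * g)) : interferenceThreshold p g N PG τ h < 0 := by
  have hexp : 0 < Real.exp τ - 1 := sub_pos.2 (Real.one_lt_exp_iff.2 hτ)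
  have hlt : h * g / (Real.exp τ - 1) < N / p := by
    rw [lt_div_iff₀ (mul_pos hp hg)] at hh
    rw [div_lt_div_iff₀ hexp hp]
    linarith
  exact mul_neg_of_neg_of_pos (mul_neg_of_pos_of_neg hp (sub_neg.2 hlt)) hPG

variable {Ω : Type*} [MeasurableSpace Ω] {Q : Measure Ω} [IsProbabilityMeasure Q]

lemma outage_eq_one_sub_integral {H I : Ω → ℝ} (hH : Measurable H) (hI : Measurable I)
    (hHI : IndepFun H I Q) (hH0 : ∀ᵐ ω ∂Q, 0 ≤ H ω) (hNI : ∀ᵐ ω ∂Q, 0 < N + I ω / PG)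
    (hp : 0 < p) (hg : 0 ≤ g) (hPG : 0 < PG) (hτ : 0 < τ) :
    Q.real {ω | Real.log (1 + p * H ω * g / (N + I ω / PG)) < τ} =
      1 - ∫ ω, Q.real {ω' | I ω' ≤ interferenceThreshold p g N PG τ (H ω)} ∂Q := by
  have hS : MeasurableSet {y : ℝ × ℝ | y.2 ≤ interferenceThreshold p g N PG τ y.1} :=
    measurableSet_le measurable_snd (by fun_prop)
  calc
    _ = Q.real {ω | I ω ≤ interferenceThreshold p g N PG τ (H ω)}ᶜ := by
      refine measureReal_congr ?_
      filter_upwards [hH0, hNI] with ω hh hi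
      exact propext ((log_one_add_sinr_lt_iff hp hg hPG hτ hh hi).trans not_le.symm)
    _ = 1 - Q.real {ω | I ω ≤ interferenceThreshold p g N PG τ (H ω)} :=
      probReal_compl_eq_one_sub (measurableSet_le hI (by fun_prop))
    _ = 1 - ∫ ω, Q.real {ω' | I ω' ≤ interferenceThreshold p g N PG τ (H ω)} ∂Q :=
      congrArg (1 - ·) (measureReal_prodMk_mem_eq_integral hH hI hHI hS)

lemma successProb_mem_Icc {I : Ω → ℝ} (hI0 : 0 ≤ᵐ[Q] I) (hp : 0 < p) (hg : 0 < g) (hPG : 0 < PG)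
    (hτ : 0 < τ) {m s : ℝ} (hs : 0 < s) {Φ ε : ℝ → ℝ}
    (hΦ : ∀ x, |Q.real {ω | (I ω - m) / s ≤ x} - Φ x| ≤ ε x) :
    Q.real {ω | I ω ≤ interferenceThreshold p g N PG τ h} ∈ Set.Icc
      (successLowerBound Φ ε ((Real.exp τ - 1) * N / (p * g)) h
        ((interferenceThreshold p g N PG τ h - m) / s))
      (successUpperBound Φ ε ((Real.exp τ - 1) * N / (p * g)) h
        ((interferenceThreshold p g N PG τ h - m) / s)) := by
  have happrox := hΦ ((interferenceThreshold p g N PG τ h - m) / s)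
  simp only [div_le_div_iff_of_pos_right hs, sub_le_sub_iff_right] at happrox
  refine ⟨successLowerBound_le measureReal_nonneg happrox,
    le_successUpperBound measureReal_le_one happrox fun hh => ?_⟩
  have null : Q {ω | I ω ≤ interferenceThreshold p g N PG τ h} = 0 := by
    refine measure_eq_zero_iff_ae_notMem.2 ?_
    filter_upwards [hI0] with ω hω
    exact not_le.2 ((interferenceThreshold_neg hp hg hPG hτ hh).trans_le hω)
  simp [measureReal_def, null]

theorem mixtureOutage_mem_Icc {α : Type*} [MeasurableSpace α] {ν : Measure α} {f G m s : α → ℝ}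
    {H : Ω → ℝ} {I : α → Ω → ℝ} {Φ : ℝ → ℝ} {ε : α → ℝ → ℝ} (hf0 : 0 ≤ᵐ[ν] f)
    (hf : ∫ r, f r ∂ν = 1) (hG : Measurable G) (hm : Measurable m) (hs : Measurable s)
    (hH : Measurable H) (hI : Measurable (Function.uncurry I)) (hΦ : Measurable Φ)
    (hε : Measurable (Function.uncurry ε)) (hp : 0 < p) (hPG : 0 < PG) (hτ : 0 < τ)
    (hH0 : ∀ᵐ ω ∂Q, 0 ≤ H ω) (hG0 : ∀ᵐ r ∂ν, 0 < G r) (hs0 : ∀ᵐ r ∂ν, 0 < s r)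
    (hI0 : ∀ᵐ r ∂ν, 0 ≤ᵐ[Q] I r) (hNI : ∀ᵐ r ∂ν, ∀ᵐ ω ∂Q, 0 < N + I r ω / PG)
    (hHI : ∀ᵐ r ∂ν, IndepFun H (I r) Q)
    (happrox : ∀ᵐ r ∂ν, ∀ x, |Q.real {ω | (I r ω - m r) / s r ≤ x} - Φ x| ≤ ε r x) :
    ∫ r, Q.real {ω | Real.log (1 + p * H ω * G r / (N + I r ω / PG)) < τ} * f r ∂ν ∈ Set.Icc
      (1 - ∫ r, f r * ∫ ω, successUpperBound Φ (ε r) ((Real.exp τ - 1) * N / (p * G r)) (H ω)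
        ((interferenceThreshold p (G r) N PG τ (H ω) - m r) / s r) ∂Q ∂ν)
      (1 - ∫ r, f r * ∫ ω, successLowerBound Φ (ε r) ((Real.exp τ - 1) * N / (p * G r)) (H ω)
        ((interferenceThreshold p (G r) N PG τ (H ω) - m r) / s r) ∂Q ∂ν) := by
  have hsuccess : Measurable (Function.uncurry fun r ω =>
      Q.real {ω' | I r ω' ≤ interferenceThreshold p (G r) N PG τ (H ω)}) := by
    have hS : MeasurableSet {y : (α × Ω) × Ω |
        Function.uncurry I (y.1.1, y.2) ≤ interferenceThreshold p (G y.1.1) N PG τ (H y.1.2)} :=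
      measurableSet_le (by fun_prop) (by fun_prop)
    exact measurable_measureReal_prodMk_mem hS measurable_id
  have hbounds : ∀ᵐ r ∂ν, ∀ ω,
      Q.real {ω' | I r ω' ≤ interferenceThreshold p (G r) N PG τ (H ω)} ∈ Set.Icc
        (successLowerBound Φ (ε r) ((Real.exp τ - 1) * N / (p * G r)) (H ω)
          ((interferenceThreshold p (G r) N PG τ (H ω) - m r) / s r))
        (successUpperBound Φ (ε r) ((Real.exp τ - 1) * N / (p * G r)) (H ω)
          ((interferenceThreshold p (G r) N PG τ (H ω) - m r) / s r)) := by
    filter_upwards [hG0, hs0, hI0, happrox] with r hg hs hI0 happrox ω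
    exact successProb_mem_Icc hI0 hp hg hPG hτ hs happrox
  refine integral_mul_mem_Icc_of_eq_one_sub hf0 hf hsuccess
    (measurable_successUpperBound (ε := fun x : α × Ω => ε x.1) hΦ (by fun_prop) (by fun_prop)
      (by fun_prop) (by fun_prop))
    (.of_forall fun _ _ => successLowerBound_nonneg) (hbounds.mono fun r hr ω => (hr ω).1)
    (hbounds.mono fun r hr ω => (hr ω).2) (.of_forall fun _ _ => successUpperBound_le_one) ?_
  filter_upwards [hG0, hNI, hHI] with r hg hNI hHI
  exact outage_eq_one_sub_integral hH (hI.comp measurable_prodMk_left) hHI hH0 hNI hp hg.le hPG hτ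

end Outage

/-- The outage capacity `C_o`: the supremum in `[0, ∞]` of the rates at which the outage curve `ρ`
meets the target outage probability `γ`, equal to `0` when there are none. -/
noncomputable def outageCapacity (ρ : ℝ → ℝ) (γ : ℝ) : ℝ≥0∞ :=
  sSup (ENNReal.ofReal '' {τ : ℝ | 0 ≤ τ ∧ ρ τ ≤ γ})

-- The rate `τ = 0`, at which `exp τ - 1` vanishes in a denominator, adds only the bottom element.
lemma outageCapacity_le_of_forall_pos {ρ₁ ρ₂ : ℝ → ℝ} (hρ : ∀ τ, 0 < τ → ρ₁ τ ≤ ρ₂ τ) (γ : ℝ) :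
    outageCapacity ρ₂ γ ≤ outageCapacity ρ₁ γ := by
  refine sSup_le ?_
  rintro _ ⟨τ, ⟨hτ, hτγ⟩, rfl⟩
  rcases hτ.eq_or_lt with rfl | hτ
  · simp
  · exact le_sSup ⟨τ, ⟨hτ.le, (hρ τ hτ).trans hτγ⟩, rfl⟩

/-- Theorem 9: bounds on the area spectral efficiency `ASE(λ,γ)` under the BARSS
association policy for homogeneous deployments.  The conditional outage
capacities are suprema in `[0,∞]` (i.e. `ℝ≥0∞`) with `sup ∅ = 0`. -/
theorem barss_area_spectral_efficiency_bounds
    {Ω : Type*} [MeasureSpace Ω] [IsProbabilityMeasure (ℙ : Measure Ω)]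
    (K : ℕ) (hK : 1 ≤ K)
    (P : Fin K → ℝ) (hP : ∀ k, 0 < P k)
    (G : Fin K → ℝ → ℝ) (hGmeas : ∀ k, Measurable (G k))
    (hGpos : ∀ k, ∀ r : ℝ, 0 ≤ r → 0 < G k r)
    (N₀ PG : ℝ) (hN₀ : 0 ≤ N₀) (hPG : 1 ≤ PG)
    (pstar : Fin K → ℝ) (hpstar : ∀ k, 0 ≤ pstar k) (hpsum : ∑ k, pstar k = 1)
    (f : Fin K → ℝ → ℝ) (hfmeas : ∀ k, Measurable (f k))
    (hfnn : ∀ k r, 0 ≤ f k r) (hfint : ∀ k, ∫ r in Set.Ici (0 : ℝ), f k r = 1)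
    (H : Fin K → Ω → ℝ) (hHmeas : ∀ k, Measurable (H k)) (hHnn : ∀ k ω, 0 ≤ H k ω)
    (I : Fin K → ℝ → Ω → ℝ)
    (hImeas : ∀ k, Measurable (Function.uncurry (I k)))
    (hInn : ∀ k, ∀ r : ℝ, 0 ≤ r → ∀ ω, 0 ≤ I k r ω)
    (hindep : ∀ k, ∀ r : ℝ, 0 ≤ r → IndepFun (H k) (I k r) ℙ)
    (hI1 : ∀ k, ∀ r : ℝ, 0 ≤ r → Integrable (I k r) ℙ)
    (hI2 : ∀ k, ∀ r : ℝ, 0 ≤ r → Integrable (fun ω => (I k r ω) ^ 2) ℙ)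
    (μ σ Ξ : Fin K → ℝ → ℝ)
    (hμmeas : ∀ k, Measurable (μ k)) (hσmeas : ∀ k, Measurable (σ k))
    (hΞmeas : ∀ k, Measurable (Ξ k))
    (hμ : ∀ k, ∀ r : ℝ, 0 ≤ r → μ k r = ∫ ω, I k r ω)
    (hσ : ∀ k, ∀ r : ℝ, 0 ≤ r → (σ k r) ^ 2 = ∫ ω, (I k r ω - μ k r) ^ 2)
    (hσpos : ∀ k, ∀ r : ℝ, 0 ≤ r → 0 < σ k r)
    (hΞnn : ∀ k, ∀ r : ℝ, 0 ≤ r → 0 ≤ Ξ k r)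
    (hpos : ∀ k, ∀ r : ℝ, 0 ≤ r → ∀ᵐ ω ∂(ℙ : Measure Ω), 0 < N₀ + I k r ω / PG)
    (hGauss : ∀ k, ∀ r : ℝ, 0 ≤ r → ∀ x : ℝ,
      |(ℙ {ω | (I k r ω - μ k r) / σ k r ≤ x}).toReal - stdNormalCDF x| ≤
        Ξ k r * berryC x)
    (ζ Vp Vm : Fin K → ℝ → ℝ → ℝ → ℝ)
    (hζ : ∀ k h τ r, ζ k h τ r =
      (P k * (h * G k r / (Real.exp τ - 1) - N₀ / P k) * PG - μ k r) / σ k r)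
    (hVp : ∀ k h τ r, Vp k h τ r =
      if (Real.exp τ - 1) * N₀ / (P k * G k r) ≤ h then
        min 1 (stdNormalCDF (ζ k h τ r) + Ξ k r * berryC (ζ k h τ r)) else 0)
    (hVm : ∀ k h τ r, Vm k h τ r =
      if (Real.exp τ - 1) * N₀ / (P k * G k r) ≤ h then
        max 0 (stdNormalCDF (ζ k h τ r) - Ξ k r * berryC (ζ k h τ r)) else 0)
    (lam γv : Fin K → ℝ)
    (hlam : ∀ k, 0 < lam k) (hγv : ∀ k, γv k ∈ Set.Ioo (0 : ℝ) 1)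
    (ρ ρp ρm : Fin K → ℝ → ℝ)
    (hρ : ∀ k τ, ρ k τ = ∫ r in Set.Ici (0 : ℝ),
      (ℙ {ω | Real.log (1 + P k * H k ω * G k r / (N₀ + I k r ω / PG)) < τ}).toReal
        * f k r)
    (hρp : ∀ k τ, ρp k τ =
      1 - ∫ r in Set.Ici (0 : ℝ), f k r * ∫ ω, Vp k (H k ω) τ r)
    (hρm : ∀ k τ, ρm k τ =
      1 - ∫ r in Set.Ici (0 : ℝ), f k r * ∫ ω, Vm k (H k ω) τ r)
    (Co Cop Com : Fin K → ℝ≥0∞)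
    (hCo : ∀ k, Co k =
      sSup (ENNReal.ofReal '' {τ : ℝ | 0 ≤ τ ∧ ρ k τ ≤ γv k}))
    (hCop : ∀ k, Cop k =
      sSup (ENNReal.ofReal '' {τ : ℝ | 0 ≤ τ ∧ ρp k τ ≤ γv k}))
    (hCom : ∀ k, Com k =
      sSup (ENNReal.ofReal '' {τ : ℝ | 0 ≤ τ ∧ ρm k τ ≤ γv k}))
    (ASE : ℝ≥0∞)
    (hASE : ASE = ∑ k, ENNReal.ofReal (lam k * (1 - γv k)) * Co k) :
    (∑ k, ENNReal.ofReal (lam k * (1 - γv k)) * Com k) ≤ ASE ∧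
      ASE ≤ ∑ k, ENNReal.ofReal (lam k * (1 - γv k)) * Cop k := by
  have hρ_mem : ∀ k τ, 0 < τ → ρ k τ ∈ Set.Icc (ρp k τ) (ρm k τ) := by
    intro k τ hτ
    have hε : Measurable (Function.uncurry fun r x => Ξ k r * berryC x) :=
      ((hΞmeas k).comp measurable_fst).mul (measurable_berryC.comp measurable_snd)
    have on_Ici {q : ℝ → Prop} (hq : ∀ r, 0 ≤ r → q r) : ∀ᵐ r ∂volume.restrict (Set.Ici 0), q r :=
      ae_restrict_of_forall_mem measurableSet_Ici hq
    simp only [hρ, hρp, hρm, hVp, hVm, hζ]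
    exact mixtureOutage_mem_Icc (.of_forall (hfnn k)) (hfint k) (hGmeas k) (hμmeas k) (hσmeas k)
      (hHmeas k) (hImeas k) measurable_stdNormalCDF hε (hP k) (one_pos.trans_le hPG) hτ
      (.of_forall (hHnn k)) (on_Ici (hGpos k)) (on_Ici (hσpos k))
      (on_Ici fun r hr => .of_forall (hInn k r hr)) (on_Ici (hpos k)) (on_Ici (hindep k))
      (on_Ici (hGauss k))
  have hCom_le (k) : Com k ≤ Co k := by
    rw [hCom, hCo]
    exact outageCapacity_le_of_forall_pos (fun τ hτ => (hρ_mem k τ hτ).2) (γv k)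
  have hCo_le (k) : Co k ≤ Cop k := by
    rw [hCo, hCop]
    exact outageCapacity_le_of_forall_pos (fun τ hτ => (hρ_mem k τ hτ).1) (γv k)
  rw [hASE]
  exact ⟨Finset.sum_le_sum fun k _ => mul_le_mul_right (hCom_le k) _,
    Finset.sum_le_sum fun k _ => mul_le_mul_right (hCo_le k) _⟩
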